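/- Let S ⊆ ℝ^n be an open convex set, m ≥ 1 an integer, and φ : S → [0,∞) a function such that φ^{1/m} is concave on S. Define, for p ∈ ℝ^n and r > 0, μ(B(p,r)) = ∫_{B(p,r) ∩ S} φ(u) du (integration with respect to n-dimensional Lebesgue measure, B(p,r) the Euclidean ball). Then for all x, y ∈ S, r > 0 and θ ∈ [0,1], μ(B(θx + (1−θ)y, r))^{1/(m+n)} ≥ θ·μ(B(x,r))^{1/(m+n)} + (1−θ)·μ(B(y,r))^{1/(m+n)}; that is, the function x ↦ μ(B(x,r)) is (m+n)-concave on S. -/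

import Mathlib

open Set MeasureTheory Metric

open scoped ENNReal NNReal Pointwise

/-- The one-dimensional Brunn–Minkowski inequality for nonempty compact sets. -/
theorem IsCompact.volume_add_le_volume_add {K L : Set ℝ} (hK : IsCompact K) (hL : IsCompact L)
    (hKne : K.Nonempty) (hLne : L.Nonempty) :
    volume K + volume L ≤ volume (K + L) := by
  obtain ⟨k, hk⟩ := hK.exists_isGreatest hKne
  obtain ⟨l, hl⟩ := hL.exists_isLeast hLne
  have hinter : (l +ᵥ K) ∩ (k +ᵥ L) ⊆ {k + l} := by
    rintro _ ⟨⟨u, hu, rfl⟩, ⟨v, hv, huv⟩⟩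
    have h₁ := hk.2 hu
    have h₂ := hl.2 hv
    simp only [vadd_eq_add, mem_singleton_iff] at huv ⊢
    linarith
  have hdisj : AEDisjoint volume (l +ᵥ K) (k +ᵥ L) :=
    measure_mono_null hinter (measure_singleton _)
  have hsub : (l +ᵥ K) ∪ (k +ᵥ L) ⊆ K + L := by
    rintro _ (⟨u, hu, rfl⟩ | ⟨v, hv, rfl⟩)
    · exact ⟨u, hu, l, hl.1, add_comm _ _⟩
    · exact ⟨k, hk.1, v, hv, rfl⟩
  calc volume K + volume L = volume (l +ᵥ K) + volume (k +ᵥ L) := by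
        rw [measure_vadd, measure_vadd]
    _ = volume ((l +ᵥ K) ∪ (k +ᵥ L)) :=
        (measure_union₀ (hL.vadd k).measurableSet.nullMeasurableSet hdisj).symm
    _ ≤ volume (K + L) := measure_mono hsub

/-- The one-dimensional Brunn–Minkowski inequality for nonempty measurable sets. -/
theorem volume_add_le_of_forall_mem {A B C : Set ℝ} (hA : MeasurableSet A) (hB : MeasurableSet B)
    (hAne : A.Nonempty) (hBne : B.Nonempty) (a b : ℝ≥0)
    (hC : ∀ u ∈ A, ∀ v ∈ B, (a : ℝ) * u + (b : ℝ) * v ∈ C) :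
    a * volume A + b * volume B ≤ volume C := by
  obtain ⟨u, hu⟩ := hAne
  obtain ⟨v, hv⟩ := hBne
  have hcompact : ∀ K ⊆ A, IsCompact K → ∀ L ⊆ B, IsCompact L →
      a * volume K + b * volume L ≤ volume C := by
    intro K hKA hK L hLB hL
    have hvol (c : ℝ≥0) (s : Set ℝ) : volume ((c : ℝ) • s) = c * volume s := by
      simp [Measure.addHaar_smul]
    calc a * volume K + b * volume L
        ≤ a * volume (insert u K) + b * volume (insert v L) := by
          gcongr <;> exact subset_insert _ _
      _ = volume ((a : ℝ) • insert u K) + volume ((b : ℝ) • insert v L) := by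
          rw [hvol, hvol]
      _ ≤ volume ((a : ℝ) • insert u K + (b : ℝ) • insert v L) :=
          ((hK.insert u).smul _).volume_add_le_volume_add ((hL.insert v).smul _)
            (insert_nonempty _ _).smul_set (insert_nonempty _ _).smul_set
      _ ≤ volume C := by
          refine measure_mono ?_
          rintro _ ⟨_, ⟨p, hp, rfl⟩, _, ⟨q, hq, rfl⟩, rfl⟩
          exact hC p (insert_subset hu hKA hp) q (insert_subset hv hLB hq)
  rw [hA.measure_eq_iSup_isCompact, hB.measure_eq_iSup_isCompact]
  simp only [ENNReal.mul_iSup, iSup_and']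
  exact ENNReal.biSup_add_biSup_le' ⟨∅, empty_subset _, isCompact_empty⟩
    ⟨∅, empty_subset _, isCompact_empty⟩ fun K hK L hL => hcompact K hK.1 hK.2 L hL.1 hL.2

/-- The layer cake formula for a function bounded by one. -/
theorem lintegral_eq_lintegral_Ioo_meas_lt_of_le_one {α : Type*} [MeasurableSpace α]
    (μ : Measure α) {f : α → ℝ≥0∞} (hf : Measurable f) (hf1 : ∀ x, f x ≤ 1) :
    ∫⁻ x, f x ∂μ = ∫⁻ t in Ioo (0 : ℝ) 1, μ {x | ENNReal.ofReal t < f x} := by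
  have hfin (x : α) : f x ≠ ∞ := ne_top_of_le_ne_top ENNReal.one_ne_top (hf1 x)
  have hcake := lintegral_eq_lintegral_meas_lt μ (f := fun x => (f x).toReal)
    (Filter.Eventually.of_forall fun x => ENNReal.toReal_nonneg) hf.ennreal_toReal.aemeasurable
  simp only [ENNReal.ofReal_toReal (hfin _)] at hcake
  rw [hcake, ← Ioo_union_Ici_eq_Ioi (zero_lt_one (α := ℝ)), lintegral_union measurableSet_Ici
    (disjoint_left.2 fun t ht ht' => absurd ht.2 (not_lt.2 ht'))]
  have htail : ∫⁻ t in Ici (1 : ℝ), μ {x | t < (f x).toReal} = 0 := by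
    rw [setLIntegral_congr_fun (g := fun _ => 0) measurableSet_Ici, lintegral_zero]
    intro t ht
    have : {x | t < (f x).toReal} = ∅ := by
      refine eq_empty_of_forall_notMem fun x hx => ?_
      have := ENNReal.toReal_mono ENNReal.one_ne_top (hf1 x)
      simp only [ENNReal.toReal_one, mem_ofPred_eq, mem_Ici] at this hx ht
      linarith
    simp [this]
  rw [htail, add_zero]
  refine setLIntegral_congr_fun measurableSet_Ioo fun t ht => ?_
  simp only [ENNReal.ofReal_lt_iff_lt_toReal ht.1.le (hfin _)]

/-- Hölder's inequality in the form combining the normalizations of two functions. -/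
theorem ENNReal.rpow_add_mul_le_mul_add_div {M : ℝ} (hM : 0 < M) (a b : ℝ≥0∞)
    {p q : ℝ≥0∞} (hp0 : p ≠ 0) (hp : p ≠ ∞) (hq0 : q ≠ 0) (hq : q ≠ ∞) (A B : ℝ≥0∞) :
    (a * A ^ (1 / (M + 1)) + b * B ^ (1 / (M + 1))) ^ (M + 1) ≤
      (a * p ^ (1 / M) + b * q ^ (1 / M)) ^ M * (a * (A / p) + b * (B / q)) := by
  have hM1 : 0 < M + 1 := by linarith
  have hscale {x X : ℝ≥0∞} (c : ℝ≥0∞) (hx0 : x ≠ 0) (hx : x ≠ ∞) :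
      c * x ^ (1 / M) * (X ^ (1 / (M + 1)) * x ^ (-(1 / M))) = c * X ^ (1 / (M + 1)) := by
    rw [mul_assoc, mul_left_comm (x ^ _), ← ENNReal.rpow_add _ _ hx0 hx]
    simp
  have hpow {x X : ℝ≥0∞} (c : ℝ≥0∞) (hx0 : x ≠ 0) (hx : x ≠ ∞) :
      c * x ^ (1 / M) * (X ^ (1 / (M + 1)) * x ^ (-(1 / M))) ^ (M + 1) = c * (X / x) := by
    rw [ENNReal.mul_rpow_of_nonneg _ _ hM1.le, ← ENNReal.rpow_mul, ← ENNReal.rpow_mul,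
      one_div_mul_cancel hM1.ne', ENNReal.rpow_one, mul_assoc, mul_left_comm (x ^ _),
      ← ENNReal.rpow_add _ _ hx0 hx]
    have : 1 / M + -(1 / M) * (M + 1) = -1 := by field_simp; ring
    rw [this, ENNReal.rpow_neg_one, div_eq_mul_inv]
  have hholder := ENNReal.inner_le_weight_mul_Lp_of_nonneg Finset.univ (p := M + 1) (by linarith)
    ![a * p ^ (1 / M), b * q ^ (1 / M)]
    ![A ^ (1 / (M + 1)) * p ^ (-(1 / M)), B ^ (1 / (M + 1)) * q ^ (-(1 / M))]
  simp only [Fin.sum_univ_two, Matrix.cons_val_zero, Matrix.cons_val_one,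
    hscale _ hp0 hp, hscale _ hq0 hq, hpow _ hp0 hp, hpow _ hq0 hq] at hholder
  refine (ENNReal.rpow_le_rpow hholder hM1.le).trans_eq ?_
  rw [ENNReal.mul_rpow_of_nonneg _ _ hM1.le, ← ENNReal.rpow_mul, ← ENNReal.rpow_mul,
    inv_mul_cancel₀ hM1.ne', ENNReal.rpow_one]
  congr 2
  field_simp
  ring

/-- The one-dimensional Borell–Brascamp–Lieb inequality for functions with finite suprema. -/
theorem borell_brascamp_lieb_real_of_iSup_ne_top {M : ℝ} (hM : 0 < M) (a b : ℝ≥0)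
    (ha : a ≠ 0) {f g h : ℝ → ℝ≥0∞} (hf : Measurable f) (hg : Measurable g) (hh : Measurable h)
    (hfsup : ⨆ u, f u ≠ ∞) (hgsup : ⨆ v, g v ≠ ∞)
    (hfgh : ∀ u v, f u ≠ 0 → g v ≠ 0 →
      (a * f u ^ (1 / M) + b * g v ^ (1 / M)) ^ M ≤ h (a * u + b * v))
    (hf0 : ∫⁻ u, f u ≠ 0) (hg0 : ∫⁻ v, g v ≠ 0) :
    (a * (∫⁻ u, f u) ^ (1 / (M + 1)) + b * (∫⁻ v, g v) ^ (1 / (M + 1))) ^ (M + 1) ≤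
      ∫⁻ w, h w := by
  set p := ⨆ u, f u
  set q := ⨆ v, g v
  have hp0 : p ≠ 0 := fun h0 => hf0 <| by simp [ENNReal.iSup_eq_zero.1 h0]
  have hq0 : q ≠ 0 := fun h0 => hg0 <| by simp [ENNReal.iSup_eq_zero.1 h0]
  set c := (a * p ^ (1 / M) + b * q ^ (1 / M)) ^ M with hc
  have hM' : 0 < 1 / M := by positivity
  have hc_top : c ≠ ∞ := by
    refine ENNReal.rpow_ne_top_of_nonneg hM.le (ENNReal.add_ne_top.2 ⟨?_, ?_⟩) <;>
    exact ENNReal.mul_ne_top ENNReal.coe_ne_top (ENNReal.rpow_ne_top_of_nonneg hM'.le ‹_›)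
  have hc0 : c ≠ 0 := by
    refine (ENNReal.rpow_pos (pos_of_ne_zero fun h0 => ?_) ?_).ne'
    · simp [ha, hp0, hfsup, ENNReal.rpow_eq_zero_iff] at h0
    · exact fun htop => hc_top (by rw [hc, htop, ENNReal.top_rpow_of_pos hM])
  have hlevel : ∀ t ∈ Ioo (0 : ℝ) 1,
      a * volume {u | ENNReal.ofReal t < f u / p} + b * volume {v | ENNReal.ofReal t < g v / q} ≤
        volume {w | ENNReal.ofReal t < min (h w / c) 1} := by
    intro t ht
    have ht1 : ENNReal.ofReal t < 1 := by simpa using ht.2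
    have hne {k : ℝ → ℝ≥0∞} (hk0 : ⨆ u, k u ≠ 0) (hk : ⨆ u, k u ≠ ∞) :
        {u | ENNReal.ofReal t < k u / ⨆ u, k u}.Nonempty := by
      have : ENNReal.ofReal t * (⨆ u, k u) < ⨆ u, k u := by
        simpa using ENNReal.mul_lt_mul_left hk0 hk ht1
      obtain ⟨u, hu⟩ := lt_iSup_iff.1 this
      exact ⟨u, (ENNReal.lt_div_iff_mul_lt (.inl hk0) (.inl hk)).2 hu⟩
    refine volume_add_le_of_forall_mem (measurableSet_lt measurable_const (hf.div_const _))
      (measurableSet_lt measurable_const (hg.div_const _)) (hne hp0 hfsup) (hne hq0 hgsup) a b ?_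
    intro u hu v hv
    have hu' : ENNReal.ofReal t * p < f u :=
      (ENNReal.lt_div_iff_mul_lt (.inl hp0) (.inl hfsup)).1 hu
    have hv' : ENNReal.ofReal t * q < g v :=
      (ENNReal.lt_div_iff_mul_lt (.inl hq0) (.inl hgsup)).1 hv
    refine lt_min ?_ ht1
    rw [ENNReal.lt_div_iff_mul_lt (.inl hc0) (.inl hc_top)]
    refine lt_of_lt_of_le ?_ (hfgh u v (pos_of_gt hu').ne' (pos_of_gt hv').ne')
    have hfactor : ENNReal.ofReal t * c = (a * (ENNReal.ofReal t * p) ^ (1 / M) +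
        b * (ENNReal.ofReal t * q) ^ (1 / M)) ^ M := by
      rw [ENNReal.mul_rpow_of_nonneg _ _ hM'.le, ENNReal.mul_rpow_of_nonneg _ _ hM'.le,
        mul_left_comm, mul_left_comm (b : ℝ≥0∞), ← mul_add, ENNReal.mul_rpow_of_nonneg _ _ hM.le,
        ← ENNReal.rpow_mul, one_div_mul_cancel hM.ne', ENNReal.rpow_one]
    rw [hfactor]
    refine ENNReal.rpow_lt_rpow (ENNReal.add_lt_add_of_lt_of_le ?_ ?_ ?_) hM
    · exact ENNReal.mul_ne_top ENNReal.coe_ne_top (ENNReal.rpow_ne_top_of_nonneg hM'.le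
        (ENNReal.mul_ne_top ENNReal.ofReal_ne_top hgsup))
    · exact ENNReal.mul_lt_mul_right (by simpa using ha) ENNReal.coe_ne_top
        (ENNReal.rpow_lt_rpow hu' hM')
    · gcongr
  have hcake {k : ℝ → ℝ≥0∞} (hk : Measurable k) :
      (∫⁻ u, k u) / (⨆ u, k u) =
        ∫⁻ t in Ioo (0 : ℝ) 1, volume {u | ENNReal.ofReal t < k u / ⨆ u, k u} := by
    rw [← lintegral_eq_lintegral_Ioo_meas_lt_of_le_one volume (hk.div_const _), div_eq_mul_inv,
      ← lintegral_mul_const _ hk]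
    · rfl
    · exact fun u => ENNReal.div_le_of_le_mul (by simpa using le_iSup k u)
  have hmeas {k : ℝ → ℝ≥0∞} (c : ℝ≥0) :
      Measurable fun t : ℝ => (c : ℝ≥0∞) * volume {u | ENNReal.ofReal t < k u} := by
    refine Measurable.const_mul (Antitone.measurable fun s t hst => measure_mono ?_) _
    exact fun u hu => (ENNReal.ofReal_le_ofReal hst).trans_lt hu
  have hint : a * ((∫⁻ u, f u) / p) + b * ((∫⁻ v, g v) / q) ≤ (∫⁻ w, h w) / c := by
    calc a * ((∫⁻ u, f u) / p) + b * ((∫⁻ v, g v) / q)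
        = ∫⁻ t in Ioo (0 : ℝ) 1, (a * volume {u | ENNReal.ofReal t < f u / p} +
            b * volume {v | ENNReal.ofReal t < g v / q}) := by
          rw [lintegral_add_left (hmeas a), lintegral_const_mul' _ _ ENNReal.coe_ne_top,
            lintegral_const_mul' _ _ ENNReal.coe_ne_top, hcake hf, hcake hg]
      _ ≤ ∫⁻ t in Ioo (0 : ℝ) 1, volume {w | ENNReal.ofReal t < min (h w / c) 1} :=
          setLIntegral_mono' measurableSet_Ioo hlevel
      _ = ∫⁻ w, min (h w / c) 1 :=
          (lintegral_eq_lintegral_Ioo_meas_lt_of_le_one volume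
            ((hh.div_const _).min measurable_const) fun w => min_le_right _ _).symm
      _ ≤ ∫⁻ w, h w / c := lintegral_mono fun w => min_le_left _ _
      _ = (∫⁻ w, h w) / c := by simp only [div_eq_mul_inv, lintegral_mul_const _ hh]
  calc _ ≤ c * (a * ((∫⁻ u, f u) / p) + b * ((∫⁻ v, g v) / q)) :=
        ENNReal.rpow_add_mul_le_mul_add_div hM a b hp0 hfsup hq0 hgsup _ _
    _ ≤ c * ((∫⁻ w, h w) / c) := by gcongr
    _ = ∫⁻ w, h w := ENNReal.mul_div_cancel hc0 hc_top

/-- The one-dimensional Borell–Brascamp–Lieb inequality. -/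
theorem borell_brascamp_lieb_real {M : ℝ} (hM : 0 < M) (a b : ℝ≥0)
    (ha : a ≠ 0) {f g h : ℝ → ℝ≥0∞} (hf : Measurable f) (hg : Measurable g) (hh : Measurable h)
    (hfgh : ∀ u v, f u ≠ 0 → g v ≠ 0 →
      (a * f u ^ (1 / M) + b * g v ^ (1 / M)) ^ M ≤ h (a * u + b * v))
    (hf0 : ∫⁻ u, f u ≠ 0) (hg0 : ∫⁻ v, g v ≠ 0) :
    (a * (∫⁻ u, f u) ^ (1 / (M + 1)) + b * (∫⁻ v, g v) ^ (1 / (M + 1))) ^ (M + 1) ≤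
      ∫⁻ w, h w := by
  have htrunc {k : ℝ → ℝ≥0∞} (hk : Measurable k) :
      Filter.Tendsto (fun N : ℕ => ∫⁻ u, min (k u) N) Filter.atTop (nhds (∫⁻ u, k u)) := by
    refine lintegral_tendsto_of_tendsto_of_monotone
      (fun N => (hk.min measurable_const).aemeasurable)
      (Filter.Eventually.of_forall fun u N N' hN => min_le_min_left _ (by exact_mod_cast hN))
      (Filter.Eventually.of_forall fun u => ?_)
    simpa using (tendsto_const_nhds (x := k u)).min ENNReal.tendsto_nat_nhds_top
  have hlim : Filter.Tendsto (fun N : ℕ => (a * (∫⁻ u, min (f u) N) ^ (1 / (M + 1)) +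
      b * (∫⁻ v, min (g v) N) ^ (1 / (M + 1))) ^ (M + 1)) Filter.atTop
      (nhds ((a * (∫⁻ u, f u) ^ (1 / (M + 1)) + b * (∫⁻ v, g v) ^ (1 / (M + 1))) ^ (M + 1))) := by
    refine (ENNReal.continuous_rpow_const.tendsto _).comp (Filter.Tendsto.add ?_ ?_)
    · exact ENNReal.Tendsto.const_mul ((ENNReal.continuous_rpow_const.tendsto _).comp (htrunc hf))
        (.inr ENNReal.coe_ne_top)
    · exact ENNReal.Tendsto.const_mul ((ENNReal.continuous_rpow_const.tendsto _).comp (htrunc hg))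
        (.inr ENNReal.coe_ne_top)
  refine le_of_tendsto hlim ?_
  filter_upwards [(htrunc hf).eventually_ne hf0, (htrunc hg).eventually_ne hg0] with N hfN hgN
  have hsup (k : ℝ → ℝ≥0∞) : ⨆ u, min (k u) N ≠ ∞ :=
    ne_top_of_le_ne_top (ENNReal.natCast_ne_top N) (iSup_le fun u => min_le_right _ _)
  refine borell_brascamp_lieb_real_of_iSup_ne_top hM a b ha (hf.min measurable_const)
    (hg.min measurable_const) hh (hsup f) (hsup g) (fun u v hu hv => ?_) hfN hgN
  refine le_trans ?_ (hfgh u v (fun h0 => hu (by simp [h0])) fun h0 => hv (by simp [h0]))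
  gcongr <;> exact min_le_left _ _

/-- The Borell–Brascamp–Lieb inequality in `Fin n → ℝ`. -/
theorem borell_brascamp_lieb_pi {M : ℝ} (hM : 0 < M) (a b : ℝ≥0) (ha : a ≠ 0) (n : ℕ)
    {f g h : (Fin n → ℝ) → ℝ≥0∞} (hf : Measurable f) (hg : Measurable g) (hh : Measurable h)
    (hfgh : ∀ u v, f u ≠ 0 → g v ≠ 0 →
      (a * f u ^ (1 / M) + b * g v ^ (1 / M)) ^ M ≤ h ((a : ℝ) • u + (b : ℝ) • v))
    (hf0 : ∫⁻ u, f u ≠ 0) (hg0 : ∫⁻ v, g v ≠ 0) :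
    (a * (∫⁻ u, f u) ^ (1 / (M + n)) + b * (∫⁻ v, g v) ^ (1 / (M + n))) ^ (M + n) ≤
      ∫⁻ w, h w := by
  induction n with
  | zero =>
    have hpoint (k : (Fin 0 → ℝ) → ℝ≥0∞) : ∫⁻ u, k u = k default := by
      rw [lintegral_unique, volume_pi, Measure.pi_empty_univ, mul_one]
      exact congrArg k (Subsingleton.elim _ _)
    simp only [hpoint, Nat.cast_zero, add_zero] at hf0 hg0 ⊢
    exact (hfgh _ _ hf0 hg0).trans_eq (congrArg h (Subsingleton.elim _ _))
  | succ n ih =>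
    have hcons : Measurable fun z : ℝ × (Fin n → ℝ) => (Fin.cons z.1 z.2 : Fin (n + 1) → ℝ) := by
      refine measurable_pi_lambda _ fun i => ?_
      refine Fin.cases ?_ (fun j => ?_) i
      · simpa using measurable_fst
      · simpa using measurable_snd.eval
    have hslice {k : (Fin (n + 1) → ℝ) → ℝ≥0∞} (hk : Measurable k) :
        ∫⁻ u, k u = ∫⁻ s, ∫⁻ u : Fin n → ℝ, k (Fin.cons s u) := by
      have hpres := (volume_preserving_piFinSuccAbove (fun _ : Fin (n + 1) => ℝ) 0).symm
      rw [← hpres.lintegral_comp hk, Measure.volume_eq_prod,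
        lintegral_prod (fun z => k ((MeasurableEquiv.piFinSuccAbove _ 0).symm z))
          (hk.comp hpres.measurable).aemeasurable]
      simp [MeasurableEquiv.piFinSuccAbove, Fin.insertNthEquiv]
    have hmeas {k : (Fin (n + 1) → ℝ) → ℝ≥0∞} (hk : Measurable k) :
        Measurable fun s => ∫⁻ u : Fin n → ℝ, k (Fin.cons s u) :=
      (hk.comp hcons).lintegral_prod_right'
    rw [hslice hf] at hf0
    rw [hslice hg] at hg0
    rw [hslice hf, hslice hg, hslice hh, Nat.cast_succ, ← add_assoc]
    refine borell_brascamp_lieb_real (by positivity) a b ha (hmeas hf) (hmeas hg) (hmeas hh)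
      (fun s t hs ht => ?_) hf0 hg0
    refine ih (hf.comp (hcons.comp measurable_prodMk_left))
      (hg.comp (hcons.comp measurable_prodMk_left))
      (hh.comp (hcons.comp measurable_prodMk_left)) (fun u v hu hv => ?_) hs ht
    refine (hfgh _ _ hu hv).trans_eq (congrArg h ?_)
    ext i
    refine Fin.cases ?_ (fun j => ?_) i <;> simp

/-- The Borell–Brascamp–Lieb inequality in Euclidean space. -/
theorem borell_brascamp_lieb_euclideanSpace {M : ℝ} (hM : 0 < M) (a b : ℝ≥0) (ha : a ≠ 0) {n : ℕ}
    {f g h : EuclideanSpace ℝ (Fin n) → ℝ≥0∞}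
    (hf : Measurable f) (hg : Measurable g) (hh : Measurable h)
    (hfgh : ∀ u v, f u ≠ 0 → g v ≠ 0 →
      (a * f u ^ (1 / M) + b * g v ^ (1 / M)) ^ M ≤ h ((a : ℝ) • u + (b : ℝ) • v))
    (hf0 : ∫⁻ u, f u ≠ 0) (hg0 : ∫⁻ v, g v ≠ 0) :
    (a * (∫⁻ u, f u) ^ (1 / (M + n)) + b * (∫⁻ v, g v) ^ (1 / (M + n))) ^ (M + n) ≤
      ∫⁻ w, h w := by
  have hpres := PiLp.volume_preserving_toLp (Fin n)
  rw [← hpres.lintegral_comp hf] at hf0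
  rw [← hpres.lintegral_comp hg] at hg0
  rw [← hpres.lintegral_comp hf, ← hpres.lintegral_comp hg, ← hpres.lintegral_comp hh]
  exact borell_brascamp_lieb_pi hM a b ha n (hf.comp hpres.measurable) (hg.comp hpres.measurable)
    (hh.comp hpres.measurable) (fun u v hu hv => hfgh _ _ hu hv) hf0 hg0

section Concave

variable {E : Type*} [NormedAddCommGroup E] [NormedSpace ℝ E] {S : Set E} {ψ : E → ℝ}

/-- A nonnegative concave function on an open set with a zero vanishes identically. -/
theorem ConcaveOn.eq_zero_of_nonneg_of_eq_zero (hS : IsOpen S) (hψ : ConcaveOn ℝ S ψ)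
    (hψ0 : ∀ u ∈ S, 0 ≤ ψ u) {u : E} (hu : u ∈ S) (hu0 : ψ u = 0) {v : E} (hv : v ∈ S) :
    ψ v = 0 := by
  have hcont : Continuous fun t : ℝ => u + t • (u - v) := by fun_prop
  have hnear : ∀ᶠ t in nhds (0 : ℝ), u + t • (u - v) ∈ S :=
    hcont.continuousAt.eventually_mem (by simpa using hS.mem_nhds hu)
  obtain ⟨t, ht, ht0⟩ :=
    ((hnear.filter_mono nhdsWithin_le_nhds).and (self_mem_nhdsWithin (s := Ioi (0 : ℝ)))).exists
  have ht0 : 0 < t := ht0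
  have hsum : 1 / (1 + t) + t / (1 + t) = 1 := by field_simp
  have hconc := hψ.2 ht hv (by positivity) (by positivity) hsum
  have hcomb : (1 / (1 + t)) • (u + t • (u - v)) + (t / (1 + t)) • v = u := by
    match_scalars <;> field_simp; ring
  rw [hcomb, hu0, smul_eq_mul, smul_eq_mul] at hconc
  have h₁ : 0 ≤ 1 / (1 + t) * ψ (u + t • (u - v)) := mul_nonneg (by positivity) (hψ0 _ ht)
  have h₂ : 0 < t / (1 + t) := by positivity
  have h₃ := hψ0 v hv
  nlinarith

/-- A nonnegative concave function on an open set is bounded above on bounded subsets. -/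
theorem ConcaveOn.exists_forall_mem_closedBall_le [FiniteDimensional ℝ E] (hS : IsOpen S)
    (hψ : ConcaveOn ℝ S ψ) (hψ0 : ∀ u ∈ S, 0 ≤ ψ u) {p : E} (hp : p ∈ S) (r : ℝ) :
    ∃ C, ∀ u ∈ closedBall p r ∩ S, ψ u ≤ C := by
  have : ProperSpace E := FiniteDimensional.proper ℝ E
  obtain ⟨ε, hε, hεS⟩ := nhds_basis_closedBall.mem_iff.1 (hS.mem_nhds hp)
  obtain ⟨C, hC⟩ := (isCompact_closedBall p ε).bddAbove_image ((hψ.continuousOn hS).mono hεS)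
  rcases lt_or_ge r 0 with hr | hr
  · exact ⟨0, fun u hu => by simp [closedBall_eq_empty.2 hr] at hu⟩
  set t := ε / (r + ε) with ht
  have ht0 : 0 < t := by positivity
  have ht1 : t ≤ 1 := by rw [ht, div_le_one (by positivity)]; linarith
  refine ⟨C / t, fun u hu => ?_⟩
  have hball : t • u + (1 - t) • p ∈ closedBall p ε := by
    have hdiff : t • u + (1 - t) • p - p = t • (u - p) := by module
    rw [mem_closedBall, dist_eq_norm, hdiff, norm_smul, Real.norm_of_nonneg ht0.le, ← dist_eq_norm]
    calc t * dist u p ≤ t * (r + ε) := by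
          have := mem_closedBall.1 hu.1
          gcongr
          linarith
      _ = ε := by rw [ht]; field_simp
  have hconc := hψ.2 hu.2 hp ht0.le (sub_nonneg.2 ht1) (by ring)
  have hle : ψ (t • u + (1 - t) • p) ≤ C := hC (mem_image_of_mem ψ hball)
  rw [smul_eq_mul, smul_eq_mul] at hconc
  rw [le_div_iff₀ ht0]
  nlinarith [mul_nonneg (sub_nonneg.2 ht1) (hψ0 p hp)]

end Concave

/-- (Generalized Prékopa–Leindler consequence.) Let `S ⊆ ℝ^n` be an open convex set and
`φ : S → [0,∞)` an `m`-concave function (`φ^{1/m}` concave). Then the function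
`x ↦ μ(B(x,r)) = ∫_{B(x,r) ∩ S} φ` is `(m+n)`-concave on `S`: for `x, y ∈ S`, `r > 0`
and `θ ∈ [0,1]`,
`μ(B(θx+(1−θ)y, r))^{1/(m+n)} ≥ θ·μ(B(x,r))^{1/(m+n)} + (1−θ)·μ(B(y,r))^{1/(m+n)}`. -/
theorem ball_measure_is_m_plus_n_concave
    (n m : ℕ) (hm : 1 ≤ m)
    (S : Set (EuclideanSpace ℝ (Fin n)))
    (hSopen : IsOpen S) (hSconv : Convex ℝ S)
    (φ : EuclideanSpace ℝ (Fin n) → ℝ)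
    (hφ_nonneg : ∀ u ∈ S, 0 ≤ φ u)
    (hφ_conc : ConcaveOn ℝ S (fun u => φ u ^ ((1 : ℝ) / m)))
    (x y : EuclideanSpace ℝ (Fin n)) (hx : x ∈ S) (hy : y ∈ S)
    (r : ℝ) (hr : 0 < r)
    (θ : ℝ) (hθ : θ ∈ Icc (0 : ℝ) 1) :
    θ * (∫ u in closedBall x r ∩ S, φ u) ^ ((1 : ℝ) / (m + n)) +
        (1 - θ) * (∫ u in closedBall y r ∩ S, φ u) ^ ((1 : ℝ) / (m + n)) ≤
      (∫ u in closedBall (θ • x + (1 - θ) • y) r ∩ S, φ u) ^ ((1 : ℝ) / (m + n)) := by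
  have hm0 : (0 : ℝ) < m := by exact_mod_cast hm
  have hmn : (0 : ℝ) < m + n := by positivity
  set ψ : EuclideanSpace ℝ (Fin n) → ℝ := fun u => φ u ^ ((1 : ℝ) / m) with hψ
  have hψ0 : ∀ u ∈ S, 0 ≤ ψ u := fun u hu => Real.rpow_nonneg (hφ_nonneg u hu) _
  have hφψ : ∀ u ∈ S, φ u = ψ u ^ (m : ℝ) := fun u hu => by
    rw [hψ, ← Real.rpow_mul (hφ_nonneg u hu), one_div_mul_cancel hm0.ne', Real.rpow_one]
  have hmeasS (p : EuclideanSpace ℝ (Fin n)) : MeasurableSet (closedBall p r ∩ S) :=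
    isClosed_closedBall.measurableSet.inter hSopen.measurableSet
  by_cases hzero : ∃ u ∈ S, φ u = 0
  · obtain ⟨u, hu, hu0⟩ := hzero
    have hint (p : EuclideanSpace ℝ (Fin n)) : ∫ u in closedBall p r ∩ S, φ u = 0 := by
      rw [setIntegral_congr_fun (g := fun _ => 0) (hmeasS p), integral_zero]
      intro v hv
      have hv0 := hφ_conc.eq_zero_of_nonneg_of_eq_zero hSopen hψ0 hu
        (by simp [hψ, hu0, hm0.ne']) hv.2
      simp only [hφψ v hv.2, hv0, Real.zero_rpow hm0.ne']
    simp only [hint, Real.zero_rpow (one_div_pos.2 hmn).ne', mul_zero, add_zero, le_refl]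
  have hpos : ∀ u ∈ S, 0 < φ u := fun u hu =>
    (hφ_nonneg u hu).lt_of_ne' fun h0 => hzero ⟨u, hu, h0⟩
  rcases hθ.1.eq_or_lt with rfl | hθ0
  · simp
  have hθ1 := sub_nonneg.2 hθ.2
  have hz : θ • x + (1 - θ) • y ∈ S := hSconv hx hy hθ.1 hθ1 (by ring)
  have hφcont : ContinuousOn φ S :=
    (((hφ_conc.continuousOn hSopen).rpow_const fun _ _ => .inr hm0.le)).congr hφψ
  set F : EuclideanSpace ℝ (Fin n) → EuclideanSpace ℝ (Fin n) → ℝ≥0∞ :=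
    fun p => (closedBall p r ∩ S).indicator fun u => ENNReal.ofReal (φ u) with hF
  have hFmeas (p) : Measurable (F p) := by
    have hφmeas : Measurable (S.indicator φ) := by
      classical
      rw [← piecewise_eq_indicator]
      exact hφcont.measurable_piecewise continuousOn_const hSopen.measurableSet
    have : F p = (closedBall p r ∩ S).indicator fun u => ENNReal.ofReal (S.indicator φ u) :=
      indicator_congr fun u hu => by rw [indicator_of_mem hu.2]
    rw [this]
    exact hφmeas.ennreal_ofReal.indicator (hmeasS p)
  have hFint (p) : ∫⁻ u, F p u = ∫⁻ u in closedBall p r ∩ S, ENNReal.ofReal (φ u) :=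
    lintegral_indicator (hmeasS p) _
  have hFpos (p) (hp : p ∈ S) : ∫⁻ u, F p u ≠ 0 := by
    have hinter : 0 < volume (closedBall p r ∩ S) :=
      Measure.measure_pos_of_mem_nhds _
        (Filter.inter_mem (closedBall_mem_nhds p hr) (hSopen.mem_nhds hp))
    rw [← pos_iff_ne_zero, lintegral_pos_iff_support (hFmeas p)]
    refine hinter.trans_le (measure_mono fun u hu => ?_)
    simp [hF, hu.1, hu.2, hpos u hu.2]
  have hFtop (p) (hp : p ∈ S) : ∫⁻ u, F p u ≠ ∞ := by
    obtain ⟨C, hC⟩ := hφ_conc.exists_forall_mem_closedBall_le hSopen hψ0 hp r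
    rw [hFint]
    refine (setLIntegral_lt_top_of_le_nnreal
      ((measure_mono inter_subset_left).trans_lt measure_closedBall_lt_top).ne
      ⟨(C ^ (m : ℝ)).toNNReal, fun u hu => ?_⟩).ne
    refine ENNReal.ofReal_le_ofReal ?_
    rw [hφψ u hu.2]
    exact Real.rpow_le_rpow (hψ0 u hu.2) (hC u hu) hm0.le
  have hFreal (p) : ∫ u in closedBall p r ∩ S, φ u = (∫⁻ u, F p u).toReal := by
    rw [hFint, integral_eq_lintegral_of_nonneg_ae]
    · exact (ae_restrict_iff' (hmeasS p)).2 (.of_forall fun u hu => hφ_nonneg u hu.2)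
    · exact (hφcont.mono inter_subset_right).aestronglyMeasurable (hmeasS p)
  have hBBL := borell_brascamp_lieb_euclideanSpace hm0 θ.toNNReal (1 - θ).toNNReal (by simpa)
    (hFmeas x) (hFmeas y) (hFmeas (θ • x + (1 - θ) • y)) (fun u v hu hv => ?_)
    (hFpos x hx) (hFpos y hy)
  · have hroot := ENNReal.rpow_le_rpow hBBL (one_div_pos.2 hmn).le
    rw [← ENNReal.rpow_mul, mul_one_div_cancel hmn.ne', ENNReal.rpow_one] at hroot
    have hreal := ENNReal.toReal_mono
      (ENNReal.rpow_ne_top_of_nonneg (one_div_pos.2 hmn).le (hFtop _ hz)) hroot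
    have hfin (c : ℝ≥0) (p) (hp : p ∈ S) :
        (c : ℝ≥0∞) * (∫⁻ u, F p u) ^ (1 / ((m : ℝ) + n)) ≠ ∞ :=
      ENNReal.mul_ne_top ENNReal.coe_ne_top
        (ENNReal.rpow_ne_top_of_nonneg (one_div_pos.2 hmn).le (hFtop p hp))
    rw [ENNReal.toReal_add (hfin _ x hx) (hfin _ y hy)] at hreal
    simpa [hFreal, ← ENNReal.toReal_rpow, hθ.1, hθ.2] using hreal
  · have hu' : u ∈ closedBall x r ∩ S := mem_of_indicator_ne_zero hu
    have hv' : v ∈ closedBall y r ∩ S := mem_of_indicator_ne_zero hv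
    have hw : θ • u + (1 - θ) • v ∈ closedBall (θ • x + (1 - θ) • y) r ∩ S := by
      refine ⟨?_, hSconv hu'.2 hv'.2 hθ.1 hθ1 (by ring)⟩
      have hdiff : θ • u + (1 - θ) • v - (θ • x + (1 - θ) • y) =
          θ • (u - x) + (1 - θ) • (v - y) := by module
      have hux := mem_closedBall_iff_norm.1 hu'.1
      have hvy := mem_closedBall_iff_norm.1 hv'.1
      rw [mem_closedBall_iff_norm, hdiff]
      refine (norm_add_le _ _).trans ?_
      rw [norm_smul, norm_smul, Real.norm_of_nonneg hθ.1, Real.norm_of_nonneg hθ1]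
      nlinarith
    have hroot {u} (hu : u ∈ S) : ENNReal.ofReal (φ u) ^ (1 / (m : ℝ)) = ENNReal.ofReal (ψ u) :=
      ENNReal.ofReal_rpow_of_nonneg (hφ_nonneg u hu) (one_div_pos.2 hm0).le
    have hconc := hφ_conc.2 hu'.2 hv'.2 hθ.1 hθ1 (by ring)
    simp only [hF, Real.coe_toNNReal _ hθ.1, Real.coe_toNNReal _ hθ1, indicator_of_mem hu',
      indicator_of_mem hv', indicator_of_mem hw, hroot hu'.2, hroot hv'.2]
    have hcoe (c : ℝ) : ((c.toNNReal : ℝ≥0) : ℝ≥0∞) = ENNReal.ofReal c := rfl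
    rw [hcoe, hcoe, ← ENNReal.ofReal_mul hθ.1, ← ENNReal.ofReal_mul hθ1,
      ← ENNReal.ofReal_add (mul_nonneg hθ.1 (hψ0 u hu'.2)) (mul_nonneg hθ1 (hψ0 v hv'.2)),
      hφψ _ hw.2, ← ENNReal.ofReal_rpow_of_nonneg (hψ0 _ hw.2) hm0.le]
    gcongr
    exact hconc
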